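/- arXiv:1110.6023 — 3 statements merged into one kernel-verified Lean document; each statement's English description precedes it below -/
import Mathlib

section
/- Let a¹ : ℝ → ℝ, a² : ℝ → ℝ, a³ : ℝ² → ℝ be continuous, and let u : ℝ² → ℝ be twice continuously differentiable and satisfy, for all (t,x), the equation ∂t∂x u + a¹(x)·∂t u + a²(t)·∂x u + a³(t,x)·u = 0. Let R, S, f, g : ℝ → ℝ be continuously differentiable. Define w(y,z) := e^{−f(y)−g(z)}·u(R(y),S(z)). Then for all (y,z): ∂y∂z w + (g'(z) + a¹(S(z))·S'(z))·∂y w + (f'(y) + a²(R(y))·R'(y))·∂z w + ( f'(y)·(g'(z) + a¹(S(z))·S'(z)) + R'(y)·(a²(R(y))·g'(z) + a³(R(y),S(z))·S'(z)) )·w = 0. -/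
/-!
Write `E = exp (-f y - g z)`. By the product and chain rules,
`w_y = E (R' u_t - f' u)`, `w_z = E (S' u_x - g' u)` and
`w_yz = E (R' S' u_tx - f' S' u_x - g' R' u_t + f' g' u)`, with `u` and its derivatives taken at
`(R y, S z)`. Substituting, the left-hand side of the transformed equation equals `E R' S'` times
the left-hand side of the original equation. The `C²` hypothesis on `u` is what makes `u_x`
differentiable in `t`, so that the second differentiation is legitimate; `g'` and `S'` are
constants in that step, so `C¹` suffices for the transformation functions.
-/

/-- The partial derivative `u_x` of a `C²` function is differentiable in `t`. -/
lemma differentiable_deriv_snd {u : ℝ × ℝ → ℝ} (hu : ContDiff ℝ 2 u) (x : ℝ) :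
    Differentiable ℝ (fun t => deriv (fun x' => u (t, x')) x) := by
  have hux : (fun t => deriv (fun x' => u (t, x')) x) = fun t => fderiv ℝ u (t, x) (0, 1) := by
    funext t
    have hpath : HasDerivAt (fun x' : ℝ => (t, x')) ((0 : ℝ), (1 : ℝ)) x :=
      (hasDerivAt_const x t).prodMk (hasDerivAt_id x)
    exact ((hu.differentiable (by norm_num) (t, x)).hasFDerivAt.comp_hasDerivAt x hpath).deriv
  rw [hux]
  have hfderiv : Differentiable ℝ (fderiv ℝ u) :=
    (hu.fderiv_right (m := 1) (by norm_num)).differentiable (by norm_num)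
  fun_prop

/-- transformation of the hyperbolic variant
`u_{tx} + a¹(x)u_t + a²(t)u_x + a³(t,x)u = 0` under the equivalence
transformation `t = R(y)`, `x = S(z)`, `u = e^{f(y)+g(z)} w`. -/
theorem stmt_4
    (a1 a2 : ℝ → ℝ) (a3 : ℝ × ℝ → ℝ)
    (ha1 : Continuous a1) (ha2 : Continuous a2) (ha3 : Continuous a3)
    (u : ℝ × ℝ → ℝ) (hu : ContDiff ℝ 2 u)
    (hueq : ∀ t x : ℝ,
      deriv (fun t' => deriv (fun x' => u (t', x')) x) t
        + a1 x * deriv (fun t' => u (t', x)) t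
        + a2 t * deriv (fun x' => u (t, x')) x
        + a3 (t, x) * u (t, x) = 0)
    (R S f g : ℝ → ℝ)
    (hR : ContDiff ℝ 1 R) (hS : ContDiff ℝ 1 S)
    (hf : ContDiff ℝ 1 f) (hg : ContDiff ℝ 1 g)
    (w : ℝ → ℝ → ℝ)
    (hw : ∀ y z : ℝ, w y z = Real.exp (-f y - g z) * u (R y, S z)) :
    ∀ y z : ℝ,
      deriv (fun y' => deriv (fun z' => w y' z') z) y
        + (deriv g z + a1 (S z) * deriv S z) * deriv (fun y' => w y' z) y
        + (deriv f y + a2 (R y) * deriv R y) * deriv (fun z' => w y z') z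
        + (deriv f y * (deriv g z + a1 (S z) * deriv S z)
            + deriv R y * (a2 (R y) * deriv g z + a3 (R y, S z) * deriv S z)) * w y z
        = 0 := by
  intro y z
  have hud : Differentiable ℝ u := hu.differentiable (by norm_num)
  have hR' (y : ℝ) : HasDerivAt R (deriv R y) y :=
    (hR.differentiable (by norm_num) y).hasDerivAt
  have hS' (z : ℝ) : HasDerivAt S (deriv S z) z :=
    (hS.differentiable (by norm_num) z).hasDerivAt
  have hf' (y : ℝ) : HasDerivAt f (deriv f y) y :=
    (hf.differentiable (by norm_num) y).hasDerivAt
  have hg' (z : ℝ) : HasDerivAt g (deriv g z) z :=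
    (hg.differentiable (by norm_num) z).hasDerivAt
  have hEy : HasDerivAt (fun y' => Real.exp (-f y' - g z))
      (Real.exp (-f y - g z) * -deriv f y) y :=
    ((hf' y).neg.sub_const (g z)).exp
  have hEz (y : ℝ) : HasDerivAt (fun z' => Real.exp (-f y - g z'))
      (Real.exp (-f y - g z) * -deriv g z) z :=
    ((hg' z).const_sub (-f y)).exp
  have huR : HasDerivAt (fun y' => u (R y', S z))
      (deriv (fun t' => u (t', S z)) (R y) * deriv R y) y := by
    have ht : DifferentiableAt ℝ (fun t' => u (t', S z)) (R y) := by fun_prop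
    exact ht.hasDerivAt.comp y (hR' y)
  have huS (y : ℝ) : HasDerivAt (fun z' => u (R y, S z'))
      (deriv (fun x' => u (R y, x')) (S z) * deriv S z) z := by
    have hx : DifferentiableAt ℝ (fun x' => u (R y, x')) (S z) := by fun_prop
    exact hx.hasDerivAt.comp z (hS' z)
  have huxR : HasDerivAt (fun y' => deriv (fun x' => u (R y', x')) (S z))
      (deriv (fun t' => deriv (fun x' => u (t', x')) (S z)) (R y) * deriv R y) y :=
    (differentiable_deriv_snd hu (S z) (R y)).hasDerivAt.comp y (hR' y)
  simp only [hw]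
  have hwz (y : ℝ) := ((hEz y).mul (huS y)).deriv
  have hwy := (hEy.mul huR).deriv
  have hwyz := (((hEy.mul_const (-deriv g z)).mul huR).add
    (hEy.mul (huxR.mul_const (deriv S z)))).deriv
  simp only [Pi.mul_def, Pi.add_def] at hwz hwy hwyz
  simp only [hwz]
  rw [hwy, hwyz]
  linear_combination (Real.exp (-f y - g z) * deriv R y * deriv S z) * hueq (R y) (S z)
end

section
/- Let a¹ : ℝ → ℝ and a² : ℝ → ℝ be continuous and let F, G : ℝ → ℝ be differentiable with F'(t) = a²(t) and G'(x) = a¹(x) for all t, x. Suppose u : ℝ² → ℝ is twice continuously differentiable and satisfies, for all (t,x), the equation ∂t∂x u + a¹(x)·∂t u + a²(t)·∂x u + a¹(x)·a²(t)·u = 0. Then the function w(t,x) := e^{F(t)+G(x)}·u(t,x) satisfies ∂t∂x w = 0 for all (t,x). -/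
/-!
Since `G' = a¹`, differentiating in `x` gives `w_x = e^{F+G} (a¹ u + u_x)`. As `a¹` does not depend
on `t` and `F' = a²`, differentiating in `t` gives
`w_{tx} = e^{F+G} (u_{tx} + a¹ u_t + a² u_x + a¹ a² u)`, which vanishes by the equation for `u`.
The regularity `u ∈ C²` ensures that `u_x` is differentiable in `t`, so the product rule applies.
-/

/-- when `a³ = a¹·a²`, the equation
`u_{tx} + a¹(x)u_t + a²(t)u_x + a¹(x)a²(t)u = 0` is reduced to the linear wave
equation `w_{tx} = 0` by the multiplier `e^{F(t)+G(x)}` with `F' = a²`, `G' = a¹`. -/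
theorem stmt_6
    (a1 a2 : ℝ → ℝ) (ha1 : Continuous a1) (ha2 : Continuous a2)
    (F G : ℝ → ℝ) (hF : Differentiable ℝ F) (hG : Differentiable ℝ G)
    (hF' : ∀ t : ℝ, deriv F t = a2 t) (hG' : ∀ x : ℝ, deriv G x = a1 x)
    (u : ℝ × ℝ → ℝ) (hu : ContDiff ℝ 2 u)
    (hueq : ∀ t x : ℝ,
      deriv (fun t' => deriv (fun x' => u (t', x')) x) t
        + a1 x * deriv (fun t' => u (t', x)) t
        + a2 t * deriv (fun x' => u (t, x')) x
        + a1 x * a2 t * u (t, x) = 0)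
    (w : ℝ → ℝ → ℝ)
    (hw : ∀ t x : ℝ, w t x = Real.exp (F t + G x) * u (t, x)) :
    ∀ t x : ℝ, deriv (fun t' => deriv (fun x' => w t' x') x) t = 0 := by
  intro t x
  have hu1 : Differentiable ℝ u := hu.differentiable (by norm_num)
  have hut : ∀ t x : ℝ, DifferentiableAt ℝ (fun t' => u (t', x)) t := fun t x => by
    fun_prop
  have hux : ∀ t x : ℝ, DifferentiableAt ℝ (fun x' => u (t, x')) x := fun t x => by
    fun_prop
  -- `u_x` is the total derivative of `u` applied to `(0, 1)`, hence differentiable in `t`.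
  have hux_eq : ∀ t : ℝ, deriv (fun x' => u (t, x')) x = fderiv ℝ u (t, x) (0, 1) := fun t =>
    ((hu1 (t, x)).hasFDerivAt.comp_hasDerivAt x
      ((hasDerivAt_const x t).prodMk (hasDerivAt_id x))).deriv
  have hutx : DifferentiableAt ℝ (fun t' => deriv (fun x' => u (t', x')) x) t := by
    have hfd : Differentiable ℝ (fderiv ℝ u) :=
      (hu.fderiv_right (m := 1) (by norm_num)).differentiable (by norm_num)
    simp only [hux_eq]
    fun_prop
  have hwx : ∀ t' : ℝ, deriv (fun x' => w t' x') x
      = Real.exp (F t' + G x) * (a1 x * u (t', x) + deriv (fun x' => u (t', x')) x) := by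
    intro t'
    simp only [hw]
    have hGx : HasDerivAt G (a1 x) x := hG' x ▸ (hG x).hasDerivAt
    rw [((hGx.const_add (F t')).exp.fun_mul (hux t' x).hasDerivAt).deriv]
    ring
  simp only [hwx]
  have hFt : HasDerivAt F (a2 t) t := hF' t ▸ (hF t).hasDerivAt
  rw [((hFt.add_const (G x)).exp.fun_mul
    (((hut t x).hasDerivAt.const_mul (a1 x)).fun_add hutx.hasDerivAt)).deriv]
  linear_combination Real.exp (F t + G x) * hueq t x
end

section
/- Let a¹, a², a³ : ℝ² → ℝ be continuous, and let S, L, J : ℝ → ℝ be three-times continuously differentiable with S'(z) ≠ 0 and L(z) ≠ 0 for all z. Then there exist functions b¹, b², b³ : ℝ² → ℝ such that for every three-times continuously differentiable y : ℝ → ℝ satisfying y'''(x) + a¹(x,y(x))·y''(x) + a²(x,y(x))·y'(x) + a³(x,y(x))·y(x) = 0 for all x, the function w(z) := (y(S(z)) − J(z))/L(z) satisfies w'''(z) + b¹(z,w(z))·w''(z) + b²(z,w(z))·w'(z) + b³(z,w(z))·w(z) = 0 at every z with w(z) ≠ 0. -/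
/-!
The function `Y(z) = y(S(z))` equals `L w + J`. Expanding `Y'`, `Y''`, `Y'''` by the chain rule
(`chain_three`) and using `S' ≠ 0`, the equation for `y` becomes
`Y''' + c₂ Y'' + c₁ Y' + c₀ Y = 0`, where the `cᵢ` depend on `z` and `Y` only. Expanding the same
derivatives of `L w + J` by the Leibniz rule (`leibniz_three`) and dividing by `L` gives an
equation for `w` of third order whose coefficients depend on `z` and `w`. Its derivative-free
remainder, including the inhomogeneous part coming from `J`, is written as `b³ w` by dividing
by `w ≠ 0`.
-/

lemma hasDerivAt_three {f : ℝ → ℝ} (hf : ContDiff ℝ 3 f) (z : ℝ) :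
    HasDerivAt f (deriv f z) z ∧ HasDerivAt (deriv f) (iteratedDeriv 2 f z) z ∧
      HasDerivAt (iteratedDeriv 2 f) (iteratedDeriv 3 f z) z := by
  refine ⟨(hf.differentiable (by norm_num) z).hasDerivAt, ?_, ?_⟩
  · have h := (hf.differentiable_iteratedDeriv 1 (by norm_num)) z
    have h2 := h.hasDerivAt
    rw [← iteratedDeriv_succ, iteratedDeriv_one] at h2
    exact h2
  · have h := (hf.differentiable_iteratedDeriv 2 (by norm_num)) z
    have h2 := h.hasDerivAt
    rw [← iteratedDeriv_succ] at h2
    exact h2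

lemma iteratedDeriv_of_hasDerivAt {f f1 f2 f3 : ℝ → ℝ} (h1 : ∀ z, HasDerivAt f (f1 z) z)
    (h2 : ∀ z, HasDerivAt f1 (f2 z) z) (h3 : ∀ z, HasDerivAt f2 (f3 z) z) :
    deriv f = f1 ∧ iteratedDeriv 2 f = f2 ∧ iteratedDeriv 3 f = f3 := by
  have e1 : deriv f = f1 := funext fun z => (h1 z).deriv
  have e2 : iteratedDeriv 2 f = f2 := by
    rw [iteratedDeriv_succ, iteratedDeriv_one, e1]
    exact funext fun z => (h2 z).deriv
  refine ⟨e1, e2, ?_⟩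
  rw [iteratedDeriv_succ, e2]
  exact funext fun z => (h3 z).deriv

/-- Faà di Bruno's formula up to order three. -/
lemma chain_three {y S : ℝ → ℝ} (hy : ContDiff ℝ 3 y) (hS : ContDiff ℝ 3 S) :
    deriv (fun z => y (S z)) = (fun z => deriv y (S z) * deriv S z) ∧
    iteratedDeriv 2 (fun z => y (S z)) = (fun z =>
      iteratedDeriv 2 y (S z) * deriv S z ^ 2 + deriv y (S z) * iteratedDeriv 2 S z) ∧
    iteratedDeriv 3 (fun z => y (S z)) = (fun z =>
      iteratedDeriv 3 y (S z) * deriv S z ^ 3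
        + 3 * iteratedDeriv 2 y (S z) * deriv S z * iteratedDeriv 2 S z
        + deriv y (S z) * iteratedDeriv 3 S z) := by
  apply iteratedDeriv_of_hasDerivAt <;> intro z <;>
    obtain ⟨s1, s2, s3⟩ := hasDerivAt_three hS z <;>
    obtain ⟨y1, y2, y3⟩ := hasDerivAt_three hy (S z)
  · exact y1.comp z s1
  · exact ((y2.comp z s1).mul s2).congr_deriv (by simp only [Function.comp]; ring)
  · exact (((y3.comp z s1).mul (s2.pow 2)).add ((y2.comp z s1).mul s3)).congr_deriv
      (by simp only [Function.comp, Pi.pow_apply]; push_cast; ring)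

/-- The Leibniz rule for `L w + J` up to order three. -/
lemma leibniz_three {L w J : ℝ → ℝ} (hL : ContDiff ℝ 3 L) (hw : ContDiff ℝ 3 w)
    (hJ : ContDiff ℝ 3 J) :
    deriv (fun z => L z * w z + J z)
      = (fun z => deriv L z * w z + L z * deriv w z + deriv J z) ∧
    iteratedDeriv 2 (fun z => L z * w z + J z) = (fun z =>
      iteratedDeriv 2 L z * w z + 2 * (deriv L z * deriv w z) + L z * iteratedDeriv 2 w z
        + iteratedDeriv 2 J z) ∧
    iteratedDeriv 3 (fun z => L z * w z + J z) = (fun z =>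
      iteratedDeriv 3 L z * w z + 3 * iteratedDeriv 2 L z * deriv w z
        + 3 * deriv L z * iteratedDeriv 2 w z + L z * iteratedDeriv 3 w z
        + iteratedDeriv 3 J z) := by
  apply iteratedDeriv_of_hasDerivAt <;> intro z <;>
    obtain ⟨l1, l2, l3⟩ := hasDerivAt_three hL z <;>
    obtain ⟨w1, w2, w3⟩ := hasDerivAt_three hw z <;>
    obtain ⟨j1, j2, j3⟩ := hasDerivAt_three hJ z
  · exact (l1.mul w1).add j1
  · exact (((l2.mul w1).add (l1.mul w2)).add j2).congr_deriv (by ring)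
  · exact ((((l3.mul w1).add ((l2.mul w2).const_mul 2)).add (l1.mul w3)).add j3).congr_deriv
      (by ring)

/-- the transformations `x = S(z)`, `y = L(z)w + J(z)` map every
solution of the nonlinear third-order equation
`y''' + a¹(x,y)y'' + a²(x,y)y' + a³(x,y)y = 0` to a solution of an equation of the
same form, with new coefficients `bⁱ(z,w)`. -/
theorem stmt_12
    (a1 a2 a3 : ℝ × ℝ → ℝ)
    (ha1 : Continuous a1) (ha2 : Continuous a2) (ha3 : Continuous a3)
    (S L J : ℝ → ℝ)
    (hS : ContDiff ℝ 3 S) (hL : ContDiff ℝ 3 L) (hJ : ContDiff ℝ 3 J)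
    (hS' : ∀ z : ℝ, deriv S z ≠ 0) (hLne : ∀ z : ℝ, L z ≠ 0) :
    ∃ b1 b2 b3 : ℝ × ℝ → ℝ,
      ∀ y : ℝ → ℝ, ContDiff ℝ 3 y →
        (∀ x : ℝ,
          iteratedDeriv 3 y x + a1 (x, y x) * iteratedDeriv 2 y x
            + a2 (x, y x) * deriv y x + a3 (x, y x) * y x = 0) →
        ∀ z : ℝ, (fun z' => (y (S z') - J z') / L z') z ≠ 0 →
          iteratedDeriv 3 (fun z' => (y (S z') - J z') / L z') z
            + b1 (z, (y (S z) - J z) / L z)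
                * iteratedDeriv 2 (fun z' => (y (S z') - J z') / L z') z
            + b2 (z, (y (S z) - J z) / L z)
                * deriv (fun z' => (y (S z') - J z') / L z') z
            + b3 (z, (y (S z) - J z) / L z) * ((y (S z) - J z) / L z) = 0 := by
  -- `c0`, `c1`, `c2` are the coefficients of the equation for `Y(z) = y(S(z)) = L w + J`,
  -- as functions of `p = (z, w)`.
  let q : ℝ × ℝ → ℝ × ℝ := fun p => (S p.1, L p.1 * p.2 + J p.1)
  let c2 : ℝ × ℝ → ℝ := fun p =>
    (a1 (q p) * deriv S p.1 ^ 2 - 3 * iteratedDeriv 2 S p.1) / deriv S p.1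
  let c1 : ℝ × ℝ → ℝ := fun p =>
    (a2 (q p) * deriv S p.1 ^ 3 - iteratedDeriv 3 S p.1 - c2 p * iteratedDeriv 2 S p.1)
      / deriv S p.1
  let c0 : ℝ × ℝ → ℝ := fun p => a3 (q p) * deriv S p.1 ^ 3
  refine ⟨fun p => (3 * deriv L p.1 + c2 p * L p.1) / L p.1,
    fun p => (3 * iteratedDeriv 2 L p.1 + 2 * c2 p * deriv L p.1 + c1 p * L p.1) / L p.1,
    fun p => (iteratedDeriv 3 L p.1 * p.2 + iteratedDeriv 3 J p.1
      + c2 p * (iteratedDeriv 2 L p.1 * p.2 + iteratedDeriv 2 J p.1)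
      + c1 p * (deriv L p.1 * p.2 + deriv J p.1)
      + c0 p * (L p.1 * p.2 + J p.1)) / (L p.1 * p.2), ?_⟩
  intro y hy hode z hz
  have hw : ContDiff ℝ 3 (fun z' => (y (S z') - J z') / L z') :=
    ((hy.comp hS).sub hJ).div hL hLne
  have hW : (y (S z) - J z) / L z = (fun z' => (y (S z') - J z') / L z') z := rfl
  have hY : (fun z => y (S z))
      = fun z => L z * (fun z' => (y (S z') - J z') / L z') z + J z := by
    funext t
    have := hLne t
    field_simp
    ring
  rw [hW]
  generalize (fun z' => (y (S z') - J z') / L z') = w at *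
  obtain ⟨d1, d2, d3⟩ := chain_three hy hS
  obtain ⟨e1, e2, e3⟩ := leibniz_three hL hw hJ
  rw [hY] at d1 d2 d3
  have f1 := congrFun (e1.symm.trans d1) z
  have f2 := congrFun (e2.symm.trans d2) z
  have f3 := congrFun (e3.symm.trans d3) z
  have f0 : y (S z) = L z * w z + J z := congrFun hY z
  have ho := hode (S z)
  rw [f0] at ho
  have hs := hS' z
  have hl := hLne z
  have hc2 : c2 (z, w z) * deriv S z
      = a1 (S z, L z * w z + J z) * deriv S z ^ 2 - 3 * iteratedDeriv 2 S z :=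
    div_mul_cancel₀ _ hs
  have hc1 : c1 (z, w z) * deriv S z = a2 (S z, L z * w z + J z) * deriv S z ^ 3
      - iteratedDeriv 3 S z - c2 (z, w z) * iteratedDeriv 2 S z :=
    div_mul_cancel₀ _ hs
  have hc0 : c0 (z, w z) = a3 (S z, L z * w z + J z) * deriv S z ^ 3 := rfl
  beta_reduce
  generalize c2 (z, w z) = C2 at *
  generalize c1 (z, w z) = C1 at *
  generalize c0 (z, w z) = C0 at *
  field_simp
  linear_combination f3 + C2 * f2 + C1 * f1 + deriv S z ^ 3 * ho
    + (iteratedDeriv 2 y (S z) * deriv S z) * hc2 + deriv y (S z) * hc1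
    + (L z * w z + J z) * hc0
end
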